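/- Let p > 3 be a prime with p ≡ 3 (mod 4). Then the number of quadratic residues modulo p in the interval (0, p/2) is strictly greater than the number of quadratic non-residues modulo p in that interval; that is, #{x : 1 ≤ x < p/2 and (x/p) = 1} > #{x : 1 ≤ x < p/2 and (x/p) = −1}, where (x/p) is the Legendre symbol. -/

import Mathlib

/-!
Write `χ` for the Legendre symbol, `S = ∑ χ(a)` over `0 < a < p/2` and `T = ∑ a χ(a)` over
`0 < a < p`. The substitution `a ↦ 2a` gives `T = χ(2) (2T + pS)`, so that `S > 0` once `T < 0`.
Since `χ` is odd, the Fourier expansion of the sawtooth function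
`∑ sin(2πnx)/n = π(1/2 - x)` yields `G(χ) L(1, χ) = -(πi/p) T`, where `G(χ)` is the Gauss sum,
and therefore the claim comes down to `L(1, χ) > 0` and `G(χ) = i√p`.

`L(1, χ)` does not vanish, and it is a limit of the values `L(s, χ) = (ζ(s) L(s, χ)) / ζ(s) > 0`
for `s > 1`, because `ζ(s) L(s, χ)` has nonnegative coefficients.

`G(χ)²` is known, and the sign of `G(χ)` comes from comparing it with Kronecker's product
`∏ (ζʳ - ζ⁻ʳ)` over odd `r < p`, which has the same square. If the two were opposite, the sum of
the corresponding integer polynomials would be divisible by the cyclotomic polynomial, which is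
`(X - 1)^(p - 1)` modulo `p`. However, applying `(X d/dX)^((p - 1)/2)` modulo `p` and setting
`X = 1` turns both polynomials into `-1`, by Euler's criterion and by Wilson's theorem.
-/

section GaussSumSign

open Finset Polynomial

lemma prod_range_two_mul {M : Type*} [CommMonoid M] (f : ℕ → M) (m : ℕ) :
    ∏ i ∈ range (2 * m), f i = (∏ k ∈ range m, f (2 * k)) * ∏ k ∈ range m, f (2 * k + 1) := by
  induction m with
  | zero => simp
  | succ m ih =>
    rw [mul_add_one, prod_range_succ, prod_range_succ, ih, prod_range_succ, prod_range_succ]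
    ac_rfl

lemma prod_range_cast_succ_eq_prod_odd {M : Type*} [CommMonoid M] {n m : ℕ} (hn : n = 2 * m + 1)
    (f : ZMod n → M) :
    ∏ i ∈ range (2 * m), f (i + 1 : ℕ) =
      ∏ k ∈ range m, f (2 * k + 1 : ℕ) * f (-(2 * k + 1 : ℕ)) := by
  rw [prod_range_two_mul, prod_mul_distrib, ← prod_range_reflect (fun k => f (2 * k + 1 + 1 : ℕ))]
  congr 1
  refine prod_congr rfl fun k hk => congrArg f ?_
  have hk : k < m := mem_range.mp hk
  rw [eq_neg_iff_add_eq_zero, ← Nat.cast_add, ZMod.natCast_eq_zero_iff]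
  exact ⟨1, by omega⟩

section EulerOperator

variable {R : Type*} [CommRing R]

/-- The Euler operator `X · d/dX`, for which `X ^ j` is an eigenvector with eigenvalue `j`. -/
noncomputable def eulerOperator (R : Type*) [CommRing R] : Module.End R R[X] :=
  LinearMap.mulLeft R X ∘ₗ derivative

lemma eulerOperator_apply (f : R[X]) : eulerOperator R f = X * derivative f := rfl

lemma eulerOperator_pow_X_pow (n j : ℕ) :
    (eulerOperator R ^ n) (X ^ j) = C ((j : R) ^ n) * X ^ j := by
  induction n with
  | zero => simp
  | succ n ih =>
    have hX : eulerOperator R (X ^ j) = C (j : R) * X ^ j := by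
      rcases j with _ | j
      · simp [eulerOperator_apply]
      · rw [eulerOperator_apply, derivative_X_pow, Nat.add_sub_cancel]
        ring
    rw [pow_succ', Module.End.mul_apply, ih, ← smul_eq_C_mul, map_smul, hX, smul_eq_C_mul,
      ← mul_assoc, ← C_mul, ← pow_succ]

lemma eval_one_eulerOperator_pow_X_sub_one_pow_mul (n : ℕ) (g : R[X]) :
    eval 1 ((eulerOperator R ^ n) ((X - 1) ^ n * g)) = n.factorial * eval 1 g := by
  induction n generalizing g with
  | zero => simp
  | succ n ih =>
    have hstep : eulerOperator R ((X - 1) ^ (n + 1) * g) =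
        (X - 1) ^ n * (X * ((n + 1 : R[X]) * g + (X - 1) * derivative g)) := by
      simp only [eulerOperator_apply, derivative_mul, derivative_pow_succ, derivative_sub,
        derivative_X, derivative_one, map_add, map_natCast, map_one]
      ring
    rw [pow_succ, Module.End.mul_apply, hstep, ih, Nat.factorial_succ]
    simp
    ring

lemma eval_one_eulerOperator_pow_prod {ι : Type*} (s : Finset ι) {f : ι → R[X]}
    (hf : ∀ i ∈ s, (f i).IsRoot 1) :
    eval 1 ((eulerOperator R ^ #s) (∏ i ∈ s, f i)) =
      (#s).factorial * ∏ i ∈ s, eval 1 (derivative (f i)) := by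
  have hfac (i) (hi : i ∈ s) : (X - 1) * (f i /ₘ (X - C 1)) = f i := by
    simpa using mul_divByMonic_eq_iff_isRoot.mpr (hf i hi)
  have hder (i) (hi : i ∈ s) : eval 1 (derivative (f i)) = eval 1 (f i /ₘ (X - C 1)) := by
    simpa using congrArg (fun g => eval 1 (derivative g)) (hfac i hi).symm
  rw [← prod_congr rfl hfac, prod_mul_distrib, prod_const,
    eval_one_eulerOperator_pow_X_sub_one_pow_mul, eval_prod, prod_congr rfl hder]

lemma eval_one_eulerOperator_pow_eq_zero {n k : ℕ} (hnk : n < k) {f : R[X]} (hf : (X - 1) ^ k ∣ f) :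
    eval 1 ((eulerOperator R ^ n) f) = 0 := by
  obtain ⟨g, rfl⟩ := hf
  obtain ⟨d, rfl⟩ := Nat.exists_eq_add_of_lt hnk
  rw [add_assoc, pow_add, mul_assoc, eval_one_eulerOperator_pow_X_sub_one_pow_mul]
  simp

end EulerOperator

section GaussSum

variable {p : ℕ} [Fact p.Prime]

/-- The Fekete polynomial `∑ (j/p) X ^ j`, whose value at a primitive `p`-th root of unity is the
quadratic Gauss sum. -/
noncomputable def feketePolynomial (p : ℕ) [Fact p.Prime] : ℤ[X] :=
  ∑ j : ZMod p, C (quadraticChar (ZMod p) j) * X ^ j.val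

/-- Kronecker's product `∏ (X ^ r - X ^ (p - r))` over the odd `r < p`; at a primitive `p`-th root
of unity it is a square root of `(-1/p) p` whose sign can be read off from its factors. -/
noncomputable def kroneckerPolynomial (p : ℕ) : ℤ[X] :=
  ∏ k ∈ range (p / 2), (X ^ (2 * k + 1) - X ^ (p - (2 * k + 1)))

lemma eval_one_eulerOperator_pow_feketePolynomial (hp : p ≠ 2) :
    eval 1 ((eulerOperator (ZMod p) ^ (p / 2)) ((feketePolynomial p).map (Int.castRingHom _))) =
      -1 := by
  have hodd : p / 2 + p / 2 = p - 1 := by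
    have := (Fact.out : p.Prime).eq_two_or_odd
    omega
  have hterm (j : ZMod p) : eval 1 ((eulerOperator (ZMod p) ^ (p / 2))
      (C (quadraticChar (ZMod p) j : ZMod p) * X ^ j.val)) = 1 - if j = 0 then 1 else 0 := by
    rw [← smul_eq_C_mul, map_smul, eulerOperator_pow_X_pow,
      quadraticChar_eq_pow_of_char_ne_two' (by rwa [ZMod.ringChar_zmod_n]), ZMod.card]
    simp only [eval_smul, eval_mul, eval_C, eval_pow, eval_X, one_pow, mul_one, smul_eq_mul,
      ZMod.natCast_val, ZMod.cast_id', id_eq, ← pow_add, hodd]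
    rw [ZMod.pow_card_sub_one]
    split_ifs <;> simp_all
  simp only [feketePolynomial, Polynomial.map_sum, Polynomial.map_mul, map_C, Polynomial.map_pow,
    map_X, map_sum, eval_finsetSum, eq_intCast (Int.castRingHom (ZMod p)), hterm]
  simp [sum_sub_distrib]

lemma eval_one_eulerOperator_pow_kroneckerPolynomial (hp : p ≠ 2) :
    eval 1 ((eulerOperator (ZMod p) ^ (p / 2)) ((kroneckerPolynomial p).map (Int.castRingHom _))) =
      -1 := by
  have hodd : 2 * (p / 2) = p - 1 := by
    have := (Fact.out : p.Prime).eq_two_or_odd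
    omega
  have hder (k) (hk : k ∈ range (p / 2)) :
      eval 1 (derivative (X ^ (2 * k + 1) - X ^ (p - (2 * k + 1)) : (ZMod p)[X])) =
        2 * (2 * k + 1 : ℕ) := by
    have hk : 2 * k + 1 ≤ p := by
      have := mem_range.mp hk
      omega
    simp [derivative_X_pow, Nat.cast_sub hk]
    ring
  have hfact : ∏ k ∈ range (p / 2), (2 * k + 1 + 1) = 2 ^ (p / 2) * (p / 2).factorial := by
    rw [← prod_range_add_one_eq_factorial, ← card_range (p / 2), ← prod_const, card_range,
      ← prod_mul_distrib]
    exact prod_congr rfl fun k _ => by ring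
  have heval := eval_one_eulerOperator_pow_prod (R := ZMod p) (range (p / 2))
    (f := fun k => X ^ (2 * k + 1) - X ^ (p - (2 * k + 1))) fun k _ => by simp
  rw [card_range, prod_congr rfl hder, prod_mul_distrib, prod_const, card_range] at heval
  rw [← ZMod.wilsons_lemma p, ← hodd, ← prod_range_add_one_eq_factorial, prod_range_two_mul, hfact]
  simp only [kroneckerPolynomial, Polynomial.map_prod, Polynomial.map_sub, Polynomial.map_pow,
    map_X, heval]
  push_cast
  ring

section AddChar

variable {n : ℕ} {R : Type*} [CommRing R] {ψ : AddChar (ZMod n) R}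

lemma isPrimitiveRoot_addChar_one [NeZero n] (hψ : ψ.IsPrimitive) : IsPrimitiveRoot (ψ 1) n where
  pow_eq_one := by
    rw [← AddChar.map_nsmul_eq_pow, nsmul_one, CharP.cast_eq_zero, AddChar.map_zero_eq_one]
  dvd_of_pow_eq_one l hl := by
    rwa [← AddChar.map_nsmul_eq_pow, nsmul_one, hψ.zmod_char_eq_one_iff,
      ZMod.natCast_eq_zero_iff] at hl

lemma addChar_natCast (ψ : AddChar (ZMod n) R) (j : ℕ) : ψ j = ψ 1 ^ j := by
  rw [← AddChar.map_nsmul_eq_pow, nsmul_one]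

lemma aeval_feketePolynomial {p : ℕ} [Fact p.Prime] (ψ : AddChar (ZMod p) R) :
    aeval (ψ 1) (feketePolynomial p) =
      gaussSum ((quadraticChar (ZMod p)).ringHomComp (Int.castRingHom R)) ψ := by
  simp [feketePolynomial, gaussSum, ← addChar_natCast]

lemma aeval_kroneckerPolynomial (ψ : AddChar (ZMod n) R) :
    aeval (ψ 1) (kroneckerPolynomial n) =
      ∏ k ∈ range (n / 2), (ψ (2 * k + 1 : ℕ) - ψ (-(2 * k + 1 : ℕ))) := by
  rw [kroneckerPolynomial, map_prod]
  refine prod_congr rfl fun k hk => ?_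
  have hk : 2 * k + 1 ≤ n := by
    have := mem_range.mp hk
    omega
  simp only [map_sub, map_pow, aeval_X, ← addChar_natCast, Nat.cast_sub hk, CharP.cast_eq_zero,
    zero_sub]

lemma prod_addChar_sub_addChar_neg_sq [IsDomain R] (hn : Odd n) (hψ : ψ.IsPrimitive) :
    (∏ k ∈ range (n / 2), (ψ (2 * k + 1 : ℕ) - ψ (-(2 * k + 1 : ℕ)))) ^ 2 =
      (-1) ^ (n / 2) * n := by
  have : NeZero n := ⟨hn.pos.ne'⟩
  have hn_eq : n = 2 * (n / 2) + 1 := (Nat.two_mul_div_two_add_one_of_odd hn).symm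
  have hroot : IsPrimitiveRoot (ψ 1 ^ 2) (2 * (n / 2) + 1) :=
    hn_eq ▸ (isPrimitiveRoot_addChar_one hψ).pow_of_coprime 2 hn.coprime_two_left
  have hpair (a : ZMod n) : (1 - ψ (2 * a)) * (1 - ψ (2 * -a)) = -(ψ a - ψ (-a)) ^ 2 := by
    have hinv : ψ a * ψ (-a) = 1 := by
      rw [← AddChar.map_add_eq_mul, add_neg_cancel, AddChar.map_zero_eq_one]
    simp only [two_mul, AddChar.map_add_eq_mul]
    linear_combination (ψ a * ψ (-a) - 1) * hinv
  have hprod : (n : R) = (-1) ^ (n / 2) *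
      (∏ k ∈ range (n / 2), (ψ (2 * k + 1 : ℕ) - ψ (-(2 * k + 1 : ℕ)))) ^ 2 := by
    calc (n : R) = ∏ i ∈ range (2 * (n / 2)), (1 - (ψ 1 ^ 2) ^ (i + 1)) := by
          rw [hroot.prod_one_sub_pow_eq_order]
          exact_mod_cast congrArg (Nat.cast (R := R)) hn_eq
      _ = ∏ i ∈ range (2 * (n / 2)), (1 - ψ (2 * (i + 1 : ℕ))) := by
          refine prod_congr rfl fun i _ => ?_
          rw [← pow_mul, ← addChar_natCast]
          push_cast
          rfl
      _ = ∏ k ∈ range (n / 2), -(ψ (2 * k + 1 : ℕ) - ψ (-(2 * k + 1 : ℕ))) ^ 2 := by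
          rw [prod_range_cast_succ_eq_prod_odd hn_eq (fun a => 1 - ψ (2 * a))]
          exact prod_congr rfl fun k _ => hpair _
      _ = _ := by
          rw [prod_neg, card_range, prod_pow]
  rw [hprod, ← mul_assoc, ← mul_pow, neg_one_mul, neg_neg, one_pow, one_mul]

end AddChar

lemma gaussSum_quadraticChar_sq {R : Type*} [CommRing R] [IsDomain R] [CharZero R]
    {ψ : AddChar (ZMod p) R} (hp : p ≠ 2) (hψ : ψ.IsPrimitive) :
    gaussSum ((quadraticChar (ZMod p)).ringHomComp (Int.castRingHom R)) ψ ^ 2 =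
      (-1) ^ (p / 2) * p := by
  have hchar : ringChar (ZMod p) ≠ 2 := by rwa [ZMod.ringChar_zmod_n]
  have hne := (MulChar.ringHomComp_ne_one_iff (Int.castRingHom R).injective_int).mpr
    (quadraticChar_ne_one hchar)
  rw [gaussSum_sq hne ((quadraticChar_isQuadratic _).comp _) hψ, MulChar.ringHomComp_apply,
    quadraticChar_neg_one hchar, ZMod.card,
    ZMod.χ₄_eq_neg_one_pow ((Fact.out : p.Prime).eq_two_or_odd.resolve_left hp)]
  simp

variable {K : Type*} [Field K] [CharZero K]

lemma cyclotomic_dvd_of_aeval_eq_zero {n : ℕ} (hn : 0 < n) {ζ : K} (hζ : IsPrimitiveRoot ζ n)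
    {f : ℤ[X]} (hf : aeval ζ f = 0) : cyclotomic n ℤ ∣ f := by
  rw [cyclotomic_eq_minpoly hζ hn]
  exact minpoly.isIntegrallyClosed_dvd (hζ.isIntegral hn) hf

lemma X_sub_one_pow_dvd_map_of_cyclotomic_dvd {f : ℤ[X]} (hf : cyclotomic p ℤ ∣ f) :
    (X - 1) ^ (p - 1) ∣ f.map (Int.castRingHom (ZMod p)) := by
  have hcyc := cyclotomic_mul_prime_eq_pow_of_not_dvd (ZMod p) (Fact.out : p.Prime).not_dvd_one
  rw [one_mul, cyclotomic_one] at hcyc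
  rw [← hcyc, ← map_cyclotomic_int]
  exact Polynomial.map_dvd _ hf

theorem gaussSum_quadraticChar_eq_prod {ψ : AddChar (ZMod p) K} (hp : p ≠ 2)
    (hψ : ψ.IsPrimitive) :
    gaussSum ((quadraticChar (ZMod p)).ringHomComp (Int.castRingHom K)) ψ =
      ∏ k ∈ range (p / 2), (ψ (2 * k + 1 : ℕ) - ψ (-(2 * k + 1 : ℕ))) := by
  have hprime : p.Prime := Fact.out
  rw [← aeval_feketePolynomial, ← aeval_kroneckerPolynomial]
  refine (sq_eq_sq_iff_eq_or_eq_neg.mp ?_).resolve_right fun hneg => ?_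
  · rw [aeval_feketePolynomial, aeval_kroneckerPolynomial, gaussSum_quadraticChar_sq hp hψ,
      prod_addChar_sub_addChar_neg_sq (hprime.odd_of_ne_two hp) hψ]
  have hdvd : cyclotomic p ℤ ∣ feketePolynomial p + kroneckerPolynomial p :=
    cyclotomic_dvd_of_aeval_eq_zero hprime.pos (isPrimitiveRoot_addChar_one hψ)
      (by rw [map_add, hneg, neg_add_cancel])
  have hlt : 2 < p := hprime.two_le.lt_of_ne hp.symm
  have hzero := eval_one_eulerOperator_pow_eq_zero (show p / 2 < p - 1 by omega)
    (X_sub_one_pow_dvd_map_of_cyclotomic_dvd hdvd)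
  rw [Polynomial.map_add, map_add, eval_add, eval_one_eulerOperator_pow_feketePolynomial hp,
    eval_one_eulerOperator_pow_kroneckerPolynomial hp] at hzero
  have : Fact (2 < p) := ⟨hlt⟩
  exact ZMod.neg_one_ne_one ((eq_neg_of_add_eq_zero_left hzero).trans (neg_neg 1))

end GaussSum

end GaussSumSign

section GaussSumValue

open Finset Complex
open scoped ComplexOrder

lemma neg_I_mul_stdAddChar_sub_stdAddChar_neg {N : ℕ} [NeZero N] (j : ℕ) :
    -I * (ZMod.stdAddChar (j : ZMod N) - ZMod.stdAddChar (-j : ZMod N)) =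
      (2 * Real.sin (2 * Real.pi * j / N) : ℝ) := by
  have hpos := ZMod.stdAddChar_coe (N := N) j
  have hneg := ZMod.stdAddChar_coe (N := N) (-j)
  push_cast at hpos hneg ⊢
  rw [hpos, hneg, sin]
  ring_nf

lemma neg_I_mul_stdAddChar_sub_stdAddChar_neg_nonneg {N : ℕ} [NeZero N] {j : ℕ}
    (hj : 2 * j ≤ N) :
    0 ≤ -I * (ZMod.stdAddChar (j : ZMod N) - ZMod.stdAddChar (-j : ZMod N)) := by
  have hN : (0 : ℝ) < N := Nat.cast_pos.mpr (NeZero.pos N)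
  rw [neg_I_mul_stdAddChar_sub_stdAddChar_neg, zero_le_real]
  refine mul_nonneg zero_le_two (Real.sin_nonneg_of_nonneg_of_le_pi (by positivity) ?_)
  rw [div_le_iff₀ hN, mul_comm 2, mul_assoc]
  gcongr
  exact_mod_cast hj

lemma I_mul_stdAddChar_sub_stdAddChar_neg_nonneg {N : ℕ} [NeZero N] {j : ℕ} (hj : N ≤ 2 * j)
    (hjN : j ≤ N) :
    0 ≤ I * (ZMod.stdAddChar (j : ZMod N) - ZMod.stdAddChar (-j : ZMod N)) := by
  convert neg_I_mul_stdAddChar_sub_stdAddChar_neg_nonneg (N := N) (j := N - j) (by omega) using 1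
  simp [Nat.cast_sub hjN]
  ring

lemma neg_I_mul_prod_stdAddChar_nonneg {p : ℕ} [NeZero p] (hp : p % 4 = 3) :
    0 ≤ -I * ∏ k ∈ range (p / 2), (ZMod.stdAddChar ((2 * k + 1 : ℕ) : ZMod p) -
      ZMod.stdAddChar (-(2 * k + 1 : ℕ) : ZMod p)) := by
  obtain ⟨t, rfl⟩ : ∃ t, p = 4 * t + 3 := ⟨p / 4, by omega⟩
  set z : ℕ → ℂ := fun k => ZMod.stdAddChar ((2 * k + 1 : ℕ) : ZMod (4 * t + 3)) -
    ZMod.stdAddChar (-(2 * k + 1 : ℕ) : ZMod (4 * t + 3))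
  have hfirst : 0 ≤ ∏ k ∈ range (t + 1), -I * z k := prod_nonneg fun k hk =>
    neg_I_mul_stdAddChar_sub_stdAddChar_neg_nonneg (by grind)
  have hlast : 0 ≤ ∏ k ∈ range t, I * z (t + 1 + k) := prod_nonneg fun k hk =>
    I_mul_stdAddChar_sub_stdAddChar_neg_nonneg (by grind) (by grind)
  have hprod : -I * ∏ k ∈ range (t + 1 + t), z k =
      (∏ k ∈ range (t + 1), -I * z k) * ∏ k ∈ range t, I * z (t + 1 + k) := by
    have hI : (-I) ^ (t + 1) * I ^ t = -I := by
      rw [pow_succ', mul_assoc, ← mul_pow]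
      simp
    rw [prod_range_add, prod_mul_distrib, prod_mul_distrib, prod_const, prod_const, card_range,
      card_range]
    linear_combination -(∏ k ∈ range (t + 1), z k) * (∏ k ∈ range t, z (t + 1 + k)) * hI
  rw [show (4 * t + 3) / 2 = t + 1 + t by omega, hprod]
  exact mul_nonneg hfirst hlast

theorem gaussSum_quadraticChar_stdAddChar {p : ℕ} [Fact p.Prime] (hp : p % 4 = 3) :
    gaussSum ((quadraticChar (ZMod p)).ringHomComp (Int.castRingHom ℂ)) ZMod.stdAddChar =
      I * √p := by
  have hp2 : p ≠ 2 := by omega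
  have hψ := ZMod.isPrimitive_stdAddChar p
  set g := gaussSum ((quadraticChar (ZMod p)).ringHomComp (Int.castRingHom ℂ)) ZMod.stdAddChar
    with hg
  have hnonneg : 0 ≤ -I * g := by
    rw [hg, gaussSum_quadraticChar_eq_prod hp2 hψ]
    exact neg_I_mul_prod_stdAddChar_nonneg hp
  have hsq : (-I * g) ^ 2 = p := by
    rw [mul_pow, gaussSum_quadraticChar_sq hp2 hψ,
      (show Odd (p / 2) from ⟨p / 4, by omega⟩).neg_one_pow]
    simp
  have hnorm : (‖-I * g‖ : ℂ) = -I * g := (eq_coe_norm_of_nonneg hnonneg).symm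
  have hsqrt : √p = ‖-I * g‖ := by
    rw [← Real.sqrt_sq (norm_nonneg (-I * g)), ← norm_pow, hsq, norm_natCast]
  rw [hsqrt, hnorm]
  linear_combination g * I_sq

end GaussSumValue

section LFunction

open Complex Filter Topology
open scoped ComplexOrder

lemma tendsto_ofReal_nhdsGT_one : Tendsto (fun x : ℝ => (x : ℂ)) (𝓝[>] 1) (𝓝 1) := by
  simpa using (continuous_ofReal.tendsto 1).mono_left nhdsWithin_le_nhds

variable {N : ℕ} [NeZero N] {χ : DirichletCharacter ℂ N}

lemma LSeries_zetaMul (χ : DirichletCharacter ℂ N) {s : ℂ} (hs : 1 < s.re) :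
    LSeries χ.zetaMul s = riemannZeta s * χ.LFunction s := by
  have hχ := LSeriesSummable_congr s (χ.apply_eq_toArithmeticFunction_apply ·)
  rw [DirichletCharacter.zetaMul, ← ArithmeticFunction.coe_mul, LSeries_convolution',
    χ.LFunction_eq_LSeries hs, ← ArithmeticFunction.LSeries_zeta_eq_riemannZeta hs,
    LSeries_congr (χ.apply_eq_toArithmeticFunction_apply ·) s]
  · rfl
  · exact ArithmeticFunction.LSeriesSummable_zeta_iff.mpr hs
  · exact hχ.mp (ZMod.LSeriesSummable_of_one_lt_re χ hs)

lemma LFunction_pos_of_sq_eq_one_of_one_lt (hsq : χ ^ 2 = 1) {x : ℝ} (hx : 1 < x) :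
    0 < χ.LFunction x := by
  have hre : 1 < (x : ℂ).re := by simpa
  have hzeta : 0 < riemannZeta x := by
    rw [← ArithmeticFunction.LSeries_zeta_eq_riemannZeta hre]
    refine LSeries.positive (fun n => Nat.cast_nonneg _) (by simp) ?_
    rw [ArithmeticFunction.abscissaOfAbsConv_zeta]
    exact_mod_cast hx
  have hmul : 0 < LSeries χ.zetaMul x := by
    refine LSeries.positive (DirichletCharacter.zetaMul_nonneg hsq) ?_ ?_
    · rw [χ.isMultiplicative_zetaMul.map_one]
      exact one_pos
    · exact (LSeries.abscissaOfAbsConv_le_of_forall_lt_LSeriesSummable (x := 1) fun y hy =>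
        χ.LSeriesSummable_zetaMul (by simpa)).trans_lt (by exact_mod_cast hx)
  rw [LSeries_zetaMul χ hre] at hmul
  exact (pos_iff_pos_of_mul_pos hmul).mp hzeta

theorem LFunction_one_pos_of_sq_eq_one (hsq : χ ^ 2 = 1) (hne : χ ≠ 1) : 0 < χ.LFunction 1 := by
  have hlim : Tendsto (fun x : ℝ => χ.LFunction x) (𝓝[>] 1) (𝓝 (χ.LFunction 1)) :=
    (χ.differentiable_LFunction hne).continuous.continuousAt.tendsto.comp tendsto_ofReal_nhdsGT_one
  refine lt_of_le_of_ne (ge_of_tendsto hlim ?_) (χ.LFunction_apply_one_ne_zero hne).symm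
  filter_upwards [self_mem_nhdsWithin] with x hx
  exact (LFunction_pos_of_sq_eq_one_of_one_lt hsq hx).le

end LFunction

section SineSeries

open Complex Filter Topology Set HurwitzZeta
open scoped ComplexOrder

/-- The integrand `z e⁻ᵗ / (1 - z e⁻ᵗ) = ∑ zⁿ e⁻ⁿᵗ` (`n ≥ 1`) of the Bose–Einstein integral
representing the polylogarithm of `z`. -/
noncomputable def boseEinsteinKernel (z : ℂ) (t : ℝ) : ℂ :=
  z * Real.exp (-t) / (1 - z * Real.exp (-t))

lemma one_sub_mem_slitPlane {w : ℂ} (hw : ‖w‖ ≤ 1) (hw1 : w ≠ 1) : 1 - w ∈ slitPlane := by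
  refine mem_slitPlane_iff.mpr (.inl ?_)
  rw [sub_re, one_re, sub_pos]
  refine ((re_le_norm w).trans hw).lt_of_ne fun hre => hw1 ?_
  have hnorm : ‖w‖ = 1 := hw.antisymm (hre ▸ re_le_norm w)
  have hw0 : 0 ≤ w := re_eq_norm.mp (hre.trans hnorm.symm)
  rw [eq_coe_norm_of_nonneg hw0, hnorm, ofReal_one]

section BoseEinstein

variable {z : ℂ}

lemma norm_mul_exp_neg (t : ℝ) : ‖z * Real.exp (-t)‖ = ‖z‖ * Real.exp (-t) := by
  rw [norm_mul, norm_real, Real.norm_of_nonneg (Real.exp_pos _).le]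

lemma norm_mul_exp_neg_lt_one (hz : ‖z‖ ≤ 1) {t : ℝ} (ht : 0 < t) :
    ‖z * Real.exp (-t)‖ < 1 := by
  rw [norm_mul_exp_neg]
  exact mul_lt_one_of_nonneg_of_lt_one_right hz (Real.exp_pos _).le (by simpa using ht)

lemma one_sub_mul_exp_neg_mem_slitPlane (hz : ‖z‖ ≤ 1) (hz1 : z ≠ 1) {t : ℝ} (ht : 0 ≤ t) :
    1 - z * Real.exp (-t) ∈ slitPlane := by
  rcases ht.eq_or_lt with rfl | ht
  · simpa using one_sub_mem_slitPlane hz hz1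
  · have hlt := norm_mul_exp_neg_lt_one hz ht
    exact one_sub_mem_slitPlane hlt.le fun h => by
      rw [h, norm_one] at hlt
      exact hlt.false

lemma hasDerivAt_log_one_sub_mul_exp_neg {t : ℝ} (h : 1 - z * Real.exp (-t) ∈ slitPlane) :
    HasDerivAt (fun t : ℝ => log (1 - z * Real.exp (-t))) (boseEinsteinKernel z t) t := by
  have hexp : HasDerivAt (fun t : ℝ => ((Real.exp (-t) : ℝ) : ℂ)) (-Real.exp (-t) : ℝ) t := by
    simpa using (hasDerivAt_neg t).exp.ofReal_comp
  convert! ((hexp.const_mul z).const_sub 1).clog_real h using 1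
  rw [boseEinsteinKernel]
  push_cast
  ring

lemma continuousOn_boseEinsteinKernel (hz : ‖z‖ ≤ 1) (hz1 : z ≠ 1) :
    ContinuousOn (boseEinsteinKernel z) (Ici 0) := by
  have hexp : Continuous fun t : ℝ => z * (Real.exp (-t) : ℂ) := by fun_prop
  exact hexp.continuousOn.div (continuous_const.sub hexp).continuousOn fun t ht =>
    slitPlane_ne_zero (one_sub_mul_exp_neg_mem_slitPlane hz hz1 ht)

lemma tendsto_mul_exp_neg_atTop (z : ℂ) :
    Tendsto (fun t : ℝ => z * (Real.exp (-t) : ℂ)) atTop (𝓝 0) := by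
  have hexp : Tendsto (fun t : ℝ => ((Real.exp (-t) : ℝ) : ℂ)) atTop (𝓝 ((0 : ℝ) : ℂ)) :=
    (continuous_ofReal.tendsto 0).comp Real.tendsto_exp_neg_atTop_nhds_zero
  simpa using hexp.const_mul z

lemma isBigO_boseEinsteinKernel_atTop (z : ℂ) :
    boseEinsteinKernel z =O[atTop] fun t => Real.exp (-1 * t) := by
  have hinv : Tendsto (fun t : ℝ => (1 - z * (Real.exp (-t) : ℂ))⁻¹) atTop (𝓝 1) := by
    simpa using ((tendsto_mul_exp_neg_atTop z).const_sub 1).inv₀ (by simp)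
  have hexp : (fun t : ℝ => z * (Real.exp (-t) : ℂ)) =O[atTop] fun t => Real.exp (-1 * t) :=
    .of_bound ‖z‖ <| .of_forall fun t => by
      rw [norm_mul_exp_neg, neg_one_mul, Real.norm_of_nonneg (Real.exp_pos _).le]
  exact (hexp.mul (hinv.isBigO_one ℝ)).congr_right fun _ => mul_one _

lemma isBigO_boseEinsteinKernel_nhdsGT (hz : ‖z‖ ≤ 1) (hz1 : z ≠ 1) :
    boseEinsteinKernel z =O[𝓝[>] 0] fun t : ℝ => t ^ (-0 : ℝ) := by
  have hcont := continuousOn_boseEinsteinKernel hz hz1 0 self_mem_Ici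
  simpa using (hcont.tendsto.mono_left (nhdsWithin_mono 0 Ioi_subset_Ici_self)).isBigO_one ℝ

lemma differentiableAt_mellin_boseEinsteinKernel (hz : ‖z‖ ≤ 1) (hz1 : z ≠ 1) {s : ℂ}
    (hs : 0 < s.re) : DifferentiableAt ℂ (mellin (boseEinsteinKernel z)) s :=
  mellin_differentiableAt_of_isBigO_rpow_exp one_pos
    (((continuousOn_boseEinsteinKernel hz hz1).mono Ioi_subset_Ici_self).locallyIntegrableOn
      measurableSet_Ioi)
    (isBigO_boseEinsteinKernel_atTop z) (isBigO_boseEinsteinKernel_nhdsGT hz hz1) hs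

lemma mellin_boseEinsteinKernel_one (hz : ‖z‖ ≤ 1) (hz1 : z ≠ 1) :
    mellin (boseEinsteinKernel z) 1 = -log (1 - z) := by
  have hint : MeasureTheory.IntegrableOn (boseEinsteinKernel z) (Ioi 0) := by
    simpa [MellinConvergent] using mellinConvergent_of_isBigO_rpow_exp one_pos
      (((continuousOn_boseEinsteinKernel hz hz1).mono Ioi_subset_Ici_self).locallyIntegrableOn
        measurableSet_Ioi)
      (isBigO_boseEinsteinKernel_atTop z) (isBigO_boseEinsteinKernel_nhdsGT hz hz1)
      (show 0 < (1 : ℂ).re by simp)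
  have hlim : Tendsto (fun t : ℝ => log (1 - z * Real.exp (-t))) atTop (𝓝 0) := by
    have := ((tendsto_mul_exp_neg_atTop z).const_sub 1).clog (by simp)
    simpa using this
  have := MeasureTheory.integral_Ioi_of_hasDerivAt_of_tendsto'
    (fun t ht => hasDerivAt_log_one_sub_mul_exp_neg (one_sub_mul_exp_neg_mem_slitPlane hz hz1 ht))
    hint hlim
  simpa [mellin] using this

lemma hasSum_mellin_boseEinsteinKernel (hz : ‖z‖ ≤ 1) {s : ℂ} (hs : 1 < s.re) :
    HasSum (fun n : ℕ => Gamma s * (z ^ (n + 1) / ((n + 1 : ℕ) : ℂ) ^ s))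
      (mellin (boseEinsteinKernel z) s) := by
  have hgeom : ∀ t ∈ Ioi (0 : ℝ),
      HasSum (fun n : ℕ => z ^ (n + 1) * Real.exp (-((n + 1 : ℕ) : ℝ) * t))
        (boseEinsteinKernel z t) := fun t ht => by
    have := (hasSum_geometric_of_norm_lt_one (norm_mul_exp_neg_lt_one hz ht)).mul_left
      (z * Real.exp (-t))
    refine this.congr_fun fun n => ?_
    rw [← pow_succ', mul_pow, ← ofReal_pow, ← Real.exp_nat_mul]
    congr 3
    ring
  have hsum : Summable fun n : ℕ => ‖z ^ (n + 1)‖ / ((n + 1 : ℕ) : ℝ) ^ s.re := by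
    refine .of_nonneg_of_le (fun n => by positivity) (fun n => ?_)
      ((summable_nat_add_iff 1).mpr (Real.summable_one_div_nat_rpow.mpr hs))
    rw [norm_pow]
    gcongr
    exact pow_le_one₀ (norm_nonneg _) hz
  simpa [mul_div_assoc] using hasSum_mellin (fun n => .inr (by positivity)) (by linarith) hgeom hsum

end BoseEinstein

lemma Gamma_mul_expZeta (x : ℝ) {s : ℂ} (hs : 1 < s.re) :
    Gamma s * expZeta x s = mellin (boseEinsteinKernel (exp (2 * Real.pi * I * x))) s := by
  have hnorm : ‖exp (2 * Real.pi * I * x)‖ ≤ 1 := by simp [Complex.norm_exp]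
  have hser := (hasSum_nat_add_iff' 1).mpr (hasSum_expZeta_of_one_lt_re x hs)
  have hs0 : s ≠ 0 := ne_zero_of_one_lt_re hs
  simp only [Finset.sum_range_one, Nat.cast_zero, zero_cpow hs0, div_zero, sub_zero] at hser
  refine ((hser.mul_left (Gamma s)).congr_fun fun n => ?_).unique
    (hasSum_mellin_boseEinsteinKernel hnorm hs)
  rw [← exp_nat_mul, mul_comm (_ * (x : ℂ))]

theorem expZeta_one {x : ℝ} (hx : (x : UnitAddCircle) ≠ 0) :
    expZeta x 1 = -log (1 - exp (2 * Real.pi * I * x)) := by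
  set z := exp (2 * Real.pi * I * x)
  have hnorm : ‖z‖ ≤ 1 := by simp [z, norm_exp]
  have hz1 : z ≠ 1 := fun h => by
    obtain ⟨n, hn⟩ := exp_eq_one_iff.mp h
    refine hx ((AddCircle.coe_eq_zero_iff 1).mpr ⟨n, ?_⟩)
    have hxn : (x : ℂ) = n := mul_left_cancel₀ two_pi_I_ne_zero (by linear_combination hn)
    rw [zsmul_one]
    exact_mod_cast hxn.symm
  have hzeta : Tendsto (fun t : ℝ => Gamma t * expZeta x t) (𝓝[>] 1) (𝓝 (Gamma 1 * expZeta x 1)) :=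
    ((differentiableAt_Gamma_one.mul (differentiableAt_expZeta x 1 (.inr hx))
      ).continuousAt.tendsto.comp tendsto_ofReal_nhdsGT_one)
  have hmellin : Tendsto (fun t : ℝ => mellin (boseEinsteinKernel z) t) (𝓝[>] 1)
      (𝓝 (mellin (boseEinsteinKernel z) 1)) :=
    (differentiableAt_mellin_boseEinsteinKernel hnorm hz1 (by simp)).continuousAt.tendsto.comp
      tendsto_ofReal_nhdsGT_one
  have heq := tendsto_nhds_unique_of_eventuallyEq hzeta hmellin <| by
    filter_upwards [self_mem_nhdsWithin] with t ht using Gamma_mul_expZeta x (by simpa using ht)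
  rwa [Complex.Gamma_one, one_mul, mellin_boseEinsteinKernel_one hnorm hz1] at heq

lemma arg_one_sub_exp_two_mul {θ : ℝ} (h0 : 0 < θ) (hπ : θ < Real.pi) :
    arg (1 - exp (2 * θ * I)) = θ - Real.pi / 2 := by
  have hpolar : 1 - exp (2 * θ * I) = ((2 * Real.sin θ : ℝ) : ℂ) *
      (cos ((θ - Real.pi / 2 : ℝ) : ℂ) + sin ((θ - Real.pi / 2 : ℝ) : ℂ) * I) := by
    rw [exp_mul_I, ← ofReal_cos, ← ofReal_sin, Real.cos_sub_pi_div_two, Real.sin_sub_pi_div_two,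
      cos_two_mul', sin_two_mul]
    push_cast
    linear_combination -sin_sq_add_cos_sq (θ : ℂ)
  rw [hpolar, arg_mul_cos_add_sin_mul_I (by linarith [Real.sin_pos_of_pos_of_lt_pi h0 hπ])]
  constructor <;> linarith

theorem sinZeta_one {x : ℝ} (h0 : 0 < x) (h1 : x < 1) :
    sinZeta x 1 = Real.pi * (1 / 2 - x) := by
  have hx : (x : UnitAddCircle) ≠ 0 :=
    (AddCircle.coe_eq_zero_iff_of_mem_Ico ⟨h0.le, h1⟩).not.mpr h0.ne'
  have harg : arg (1 - exp (2 * Real.pi * I * x)) = Real.pi * x - Real.pi / 2 := by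
    rw [← arg_one_sub_exp_two_mul (by positivity) (mul_lt_of_lt_one_right Real.pi_pos h1)]
    push_cast
    ring_nf
  have hconj : expZeta ((-x : ℝ) : UnitAddCircle) 1 = (starRingEnd ℂ) (expZeta x 1) := by
    have hne : arg (1 - exp (2 * Real.pi * I * x)) ≠ Real.pi := by
      rw [harg]
      nlinarith [Real.pi_pos]
    rw [expZeta_one hx, expZeta_one (by simpa using hx), map_neg, ← log_conj _ hne,
      map_sub, map_one, ← exp_conj]
    simp [conj_ofNat]
  rw [sinZeta_eq, ← AddCircle.coe_neg, hconj, sub_conj, expZeta_one hx, neg_im, log_im, harg]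
  push_cast
  field_simp
  ring

end SineSeries

section ClassNumberFormula

open Complex HurwitzZeta
open scoped ComplexOrder ZMod

theorem LFunction_dft_one_of_odd {N : ℕ} [NeZero N] {Φ : ZMod N → ℂ} (hΦ : Φ.Odd) :
    ZMod.LFunction (𝓕 Φ) 1 = I * Real.pi / N * ∑ j, Φ j * j.val := by
  have hcos : ∑ j, Φ j * cosZeta (ZMod.toAddCircle j) 1 = 0 :=
    (hΦ.mul_even fun j => by rw [map_neg, cosZeta_neg]).sum_eq_zero
  have hsin (j : ZMod N) : Φ j * sinZeta (ZMod.toAddCircle j) 1 =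
      Real.pi / 2 * Φ j - Real.pi / N * (Φ j * j.val) := by
    rcases eq_or_ne j 0 with rfl | hj
    · simp [hΦ.map_zero]
    · have hN : (0 : ℝ) < N := Nat.cast_pos.mpr (NeZero.pos N)
      have hval : (0 : ℝ) < j.val := Nat.cast_pos.mpr (ZMod.val_pos.mpr hj)
      rw [ZMod.toAddCircle_apply, sinZeta_one (by positivity)
        ((div_lt_one hN).mpr (by exact_mod_cast j.val_lt))]
      push_cast
      ring
  calc ZMod.LFunction (𝓕 Φ) 1
      = ∑ j, (Φ j * cosZeta (ZMod.toAddCircle j) 1 -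
          I * (Φ j * sinZeta (ZMod.toAddCircle j) 1)) := by
        rw [ZMod.LFunction_dft Φ (.inl hΦ.map_zero)]
        refine Finset.sum_congr rfl fun j _ => ?_
        rw [expZeta, map_neg, cosZeta_neg, sinZeta_neg]
        ring
    _ = I * Real.pi / N * ∑ j, Φ j * j.val := by
        rw [Finset.sum_sub_distrib, hcos, ← Finset.mul_sum, Finset.sum_congr rfl fun j _ => hsin j,
          Finset.sum_sub_distrib, ← Finset.mul_sum, ← Finset.mul_sum, hΦ.sum_eq_zero]
        ring

lemma dirichletCharacter_isPrimitive_of_ne_one {p : ℕ} [Fact p.Prime] {R : Type*}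
    [CommMonoidWithZero R] {χ : DirichletCharacter R p} (hχ : χ ≠ 1) : χ.IsPrimitive := by
  rw [DirichletCharacter.isPrimitive_def]
  refine ((Nat.dvd_prime Fact.out).mp χ.conductor_dvd_level).resolve_left fun h => hχ ?_
  exact DirichletCharacter.eq_one_iff_conductor_eq_one.mpr h

theorem gaussSum_mul_LFunction_inv_one {N : ℕ} [NeZero N] {χ : DirichletCharacter ℂ N}
    (hχ : χ.IsPrimitive) (hodd : χ.Odd) :
    gaussSum χ ZMod.stdAddChar * χ⁻¹.LFunction 1 = -(I * Real.pi / N * ∑ a, χ a * a.val) := by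
  have hinv : χ⁻¹.Odd := by
    rw [DirichletCharacter.Odd, MulChar.inv_apply_eq_inv', hodd, inv_neg, inv_one]
  have hdft : ZMod.LFunction (𝓕 χ) 1 = -(gaussSum χ ZMod.stdAddChar * χ⁻¹.LFunction 1) := by
    simp only [DirichletCharacter.LFunction, ZMod.LFunction,
      hχ.fourierTransform_eq_inv_mul_gaussSum, hinv.eval_neg, Finset.mul_sum,
      ← Finset.sum_neg_distrib]
    exact Finset.sum_congr rfl fun a _ => by ring
  rw [← neg_eq_iff_eq_neg, ← hdft, LFunction_dft_one_of_odd hodd.to_fun]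

theorem sum_quadraticChar_mul_val_neg {p : ℕ} [Fact p.Prime] (hp : p % 4 = 3) :
    ∑ a : ZMod p, quadraticChar (ZMod p) a * (a.val : ℤ) < 0 := by
  have hchar : ringChar (ZMod p) ≠ 2 := by
    rw [ZMod.ringChar_zmod_n]
    omega
  set χ : DirichletCharacter ℂ p := (quadraticChar (ZMod p)).ringHomComp (Int.castRingHom ℂ)
    with hχ
  have hquad : χ.IsQuadratic := (quadraticChar_isQuadratic (ZMod p)).comp _
  have hne : χ ≠ 1 := (MulChar.ringHomComp_ne_one_iff (Int.castRingHom ℂ).injective_int).mpr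
    (quadraticChar_ne_one hchar)
  have hodd : χ.Odd := by
    rw [DirichletCharacter.Odd, hχ, MulChar.ringHomComp_apply, quadraticChar_neg_one hchar,
      ZMod.card, ZMod.χ₄_nat_three_mod_four hp]
    simp
  have hL : 0 < χ.LFunction 1 := LFunction_one_pos_of_sq_eq_one hquad.sq_eq_one hne
  set T : ℤ := ∑ a : ZMod p, quadraticChar (ZMod p) a * (a.val : ℤ) with hT
  have hsum : ∑ a : ZMod p, χ a * a.val = T := by
    simp [hT, hχ]
  have hclass := gaussSum_mul_LFunction_inv_one (dirichletCharacter_isPrimitive_of_ne_one hne) hodd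
  rw [hquad.inv, gaussSum_quadraticChar_stdAddChar hp, hsum] at hclass
  obtain ⟨l, hl, hlL⟩ : ∃ l : ℝ, 0 < l ∧ χ.LFunction 1 = l :=
    ⟨_, norm_pos_iff.mpr hL.ne', eq_coe_norm_of_nonneg hL.le⟩
  have hreal : √p * l = -(Real.pi / p * T) := by
    rw [hlL] at hclass
    have := mul_left_cancel₀ I_ne_zero (b := (√p * l : ℂ)) (c := -(Real.pi / p * T))
      (by linear_combination hclass)
    exact_mod_cast this
  have hp0 : (0 : ℝ) < p := Nat.cast_pos.mpr (NeZero.pos p)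
  have hneg : Real.pi / p * T < 0 := by
    rw [← neg_pos, ← hreal]
    positivity
  exact Int.cast_lt_zero.mp (neg_of_mul_neg_right hneg (by positivity))

end ClassNumberFormula

section HalfInterval

open Finset

lemma zmod_val_two_mul {N : ℕ} [NeZero N] (a : ZMod N) :
    (2 * a).val = if 2 * a.val < N then 2 * a.val else 2 * a.val - N := by
  split_ifs with h
  · rw [two_mul, ZMod.val_add_of_lt (by omega), two_mul]
  · rw [two_mul, ZMod.val_add_of_le (by omega), two_mul]

theorem sum_dirichletCharacter_mul_val {N : ℕ} [NeZero N] {R : Type*} [CommRing R] [IsDomain R]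
    (hN : Odd N) {χ : DirichletCharacter R N} (hχ : χ ≠ 1) :
    ∑ a, χ a * (a.val : R) =
      χ 2 * (2 * ∑ a, χ a * (a.val : R) + N * ∑ a with 2 * a.val < N, χ a) := by
  have hval (a : ZMod N) :
      ((2 * a).val : R) = 2 * a.val - N + if 2 * a.val < N then (N : R) else 0 := by
    rw [zmod_val_two_mul]
    split_ifs with h
    · push_cast
      ring
    · rw [Nat.cast_sub (not_lt.mp h)]
      push_cast
      ring
  have hunit : IsUnit (2 : ZMod N) := (ZMod.isUnit_iff_coprime 2 N).mpr hN.coprime_two_left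
  calc ∑ a, χ a * (a.val : R) = ∑ a, χ (2 * a) * ((2 * a).val : R) :=
        (Equiv.sum_comp hunit.unit.mulLeft fun a => χ a * (a.val : R)).symm
    _ = χ 2 * (2 * ∑ a, χ a * (a.val : R) - N * ∑ a, χ a +
          N * ∑ a with 2 * a.val < N, χ a) := by
        rw [sum_filter]
        simp only [map_mul, hval, mul_sum, ← sum_sub_distrib, ← sum_add_distrib]
        refine sum_congr rfl fun a _ => ?_
        split_ifs <;> ring
    _ = _ := by rw [MulChar.sum_eq_zero_of_ne_one hχ, mul_zero, sub_zero]

theorem sum_quadraticChar_lt_half_pos {p : ℕ} [Fact p.Prime] (hp : p % 4 = 3) :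
    0 < ∑ a : ZMod p with 2 * a.val < p, quadraticChar (ZMod p) a := by
  have hchar : ringChar (ZMod p) ≠ 2 := by
    rw [ZMod.ringChar_zmod_n]
    omega
  have hneg := sum_quadraticChar_mul_val_neg hp
  have hdouble := sum_dirichletCharacter_mul_val (Nat.odd_iff.mpr (by omega))
    (quadraticChar_ne_one hchar)
  have hp0 : (0 : ℤ) < p := Nat.cast_pos.mpr (NeZero.pos p)
  refine pos_of_mul_pos_right (a := (p : ℤ)) ?_ hp0.le
  rcases quadraticChar_dichotomy (Ring.two_ne_zero hchar) with h2 | h2 <;>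
    rw [h2] at hdouble <;> linarith

lemma sum_eq_card_sub_card {ι : Type*} {s : Finset ι} {f : ι → ℤ}
    (hf : ∀ i ∈ s, f i = 0 ∨ f i = 1 ∨ f i = -1) :
    ∑ i ∈ s, f i = #{i ∈ s | f i = 1} - #{i ∈ s | f i = -1} := by
  rw [card_filter, card_filter]
  push_cast
  rw [← sum_sub_distrib]
  refine sum_congr rfl fun i hi => ?_
  rcases hf i hi with h | h | h <;> simp [h]

lemma sum_Ico_filter_two_mul_lt {N : ℕ} [NeZero N] {M : Type*} [AddCommMonoid M] {f : ZMod N → M}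
    (hf : f 0 = 0) :
    ∑ x ∈ Ico (1 : ℤ) N with 2 * x < (N : ℤ), f x = ∑ a : ZMod N with 2 * a.val < N, f a := by
  have hval {x : ℤ} (hx : x ∈ Ico (1 : ℤ) N) : ((x : ZMod N).val : ℤ) = x := by
    rw [mem_Ico] at hx
    rw [ZMod.val_intCast, Int.emod_eq_of_lt (by omega) hx.2]
  refine sum_of_injOn (fun x : ℤ => (x : ZMod N)) ?_ ?_ ?_ fun _ _ => rfl
  · intro x hx y hy hxy
    rw [mem_coe, mem_filter] at hx hy
    have hxy : (x : ZMod N) = y := hxy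
    rw [← hval hx.1, ← hval hy.1, hxy]
  · intro x hx
    rw [mem_coe, mem_filter] at hx
    have := hval hx.1
    simp only [mem_coe, mem_filter_univ]
    omega
  · intro a ha hnot
    rw [mem_filter_univ] at ha
    by_contra hne
    have ha0 : 0 < a.val := ZMod.val_pos.mpr fun h => hne (h ▸ hf)
    refine hnot ⟨a.val, ?_, by simp⟩
    simp only [mem_coe, mem_filter, mem_Ico]
    omega

end HalfInterval

/-- for a prime `p > 3` with `p ≡ 3 (mod 4)`, the quadratic
residues outnumber the non-residues in the interval `(0, p/2)`:
`#{x : 1 ≤ x < p/2, (x/p) = 1} > #{x : 1 ≤ x < p/2, (x/p) = −1}`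
(the condition `x < p/2` is rewritten as `2x < p`). -/
theorem residues_outnumber_nonresidues (p : ℕ) [Fact p.Prime]
    (hp3 : 3 < p) (hpmod : p % 4 = 3) :
    ((Finset.Ico (1 : ℤ) (p : ℤ)).filter
        (fun x => 2 * x < (p : ℤ) ∧ legendreSym p x = 1)).card >
      ((Finset.Ico (1 : ℤ) (p : ℤ)).filter
        (fun x => 2 * x < (p : ℤ) ∧ legendreSym p x = -1)).card := by
  have hpos : 0 < ∑ x ∈ Finset.Ico (1 : ℤ) p with 2 * x < (p : ℤ), legendreSym p x :=
    (sum_quadraticChar_lt_half_pos hpmod).trans_eq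
      (sum_Ico_filter_two_mul_lt quadraticChar_zero).symm
  rw [sum_eq_card_sub_card (f := legendreSym p)
      fun x _ => quadraticChar_isQuadratic (ZMod p) x,
    Finset.filter_filter, Finset.filter_filter] at hpos
  exact_mod_cast sub_pos.mp hpos
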